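/- arXiv:2604.26863 — 3 statements merged into one kernel-verified Lean document; each statement's English description precedes it below -/
import Mathlib

section
/- In any bounded region of the complex plane, A admits only finitely many eigenvalues: for every R > 0, the set of λ ∈ ℂ with |λ| ≤ R for which there exists a nonzero differentiable v = (v^h, v^c) : [0,1] → ℂ² with v^h(0) = 0 and v^c(1) = 0 satisfying −u₁ (v^h)' − c₁(v^h − v^c) = λ v^h and u₂ (v^c)' + c₂(v^h − v^c) = λ v^c on [0,1], is finite. -/
/-!
Solved for the derivative, `A v = λ v` reads `v' = M(λ) v` with `M(λ)` affine in `λ`. Solutions with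
`v^h(0) = 0` are multiples of `exp (x M(λ)) (0, 1)`, so at an eigenvalue the second component of
`exp (M(λ)) (0, 1)` vanishes. This component is an entire function of `λ`, hence it suffices to find
one `λ` where it is nonzero. When `λ` is large in a direction in which both `λ / u₁` and `λ / u₂`
have positive real part, `‖v^c‖² - ‖v^h‖²` increases along solutions; the boundary conditions make
it nonnegative at `0` and nonpositive at `1`, which forces `v(0) = 0`.
-/

open Complex

section LinearODE

variable {E : Type*} [NormedAddCommGroup E] [NormedSpace ℂ E]

theorem exp_zero_smul_apply (L : E →L[ℂ] E) (w : E) : NormedSpace.exp ((0 : ℝ) • L) w = w := by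
  rw [zero_smul, NormedSpace.exp_zero, one_apply_eq_self]

variable [CompleteSpace E]

theorem hasDerivAt_exp_smul_apply (L : E →L[ℂ] E) (w : E) (t : ℝ) :
    HasDerivAt (fun s : ℝ ↦ NormedSpace.exp (s • L) w) (L (NormedSpace.exp (t • L) w)) t :=
  ((ContinuousLinearMap.apply ℂ E w).restrictScalars ℝ).hasFDerivAt.comp_hasDerivAt t
    (hasDerivAt_exp_smul_const' (𝕂 := ℝ) L t)

theorem eqOn_exp_smul_apply_of_hasDerivWithinAt {L : E →L[ℂ] E} {v : ℝ → E} {a b : ℝ}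
    (hv : ∀ t ∈ Set.Icc a b, HasDerivWithinAt v (L (v t)) (Set.Icc a b) t) :
    Set.EqOn v (fun t ↦ NormedSpace.exp ((t - a) • L) (v a)) (Set.Icc a b) := by
  have hflow (t : ℝ) : HasDerivAt (fun s ↦ NormedSpace.exp ((s - a) • L) (v a))
      (L (NormedSpace.exp ((t - a) • L) (v a))) t :=
    (hasDerivAt_exp_smul_apply L (v a) (t - a)).comp_sub_const t a
  refine ODE_solution_unique (v := fun _ ↦ L) (fun _ ↦ L.lipschitz)
    (fun t ht ↦ (hv t ht).continuousWithinAt)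
    (fun t ht ↦ (hv t (Set.Ico_subset_Icc_self ht)).mono_of_mem_nhdsWithin
      (Icc_mem_nhdsGE_of_mem ht))
    (fun t _ ↦ (hflow t).continuousAt.continuousWithinAt)
    (fun t _ ↦ (hflow t).hasDerivWithinAt) ?_
  simp

end LinearODE

theorem finite_inter_setOf_eq_zero_of_differentiable {f : ℂ → ℂ} (hf : Differentiable ℂ f) {z : ℂ}
    (hz : f z ≠ 0) {S : Set ℂ} (hS : Bornology.IsBounded S) : (S ∩ {w | f w = 0}).Finite := by
  have hcod : f ⁻¹' {0}ᶜ ∈ Filter.codiscreteWithin (closure S) :=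
    Filter.codiscreteWithin_mono (Set.subset_univ _)
      (AnalyticOnNhd.preimage_zero_mem_codiscrete (fun w _ ↦ hf.analyticAt w) hz)
  refine (hS.isCompact_closure.finite_sdiff_of_mem_codiscreteWithin hcod).subset ?_
  exact fun w hw ↦ ⟨subset_closure hw.1, fun h ↦ h hw.2⟩

/-- `v` solves `v' = L v` on `[0, 1]`, with its first component vanishing at the left endpoint and
its second component vanishing at the right endpoint. -/
structure IsTwoPointSolution {E F : Type*} [NormedAddCommGroup E] [NormedSpace ℂ E]
    [NormedAddCommGroup F] [NormedSpace ℂ F] (L : E × F →L[ℂ] E × F) (v : ℝ → E × F) : Prop where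
  hasDerivWithinAt : ∀ x ∈ Set.Icc (0 : ℝ) 1, HasDerivWithinAt v (L (v x)) (Set.Icc 0 1) x
  fst_zero : (v 0).1 = 0
  snd_one : (v 1).2 = 0

section Shooting

variable {E : Type*} [NormedAddCommGroup E] [NormedSpace ℂ E]

/-- The shooting function: the second component at `x = 1` of the solution of `v' = L v` started
from `(0, 1)` at `x = 0`. -/
noncomputable def shootingValue (L : E × ℂ →L[ℂ] E × ℂ) : ℂ :=
  (NormedSpace.exp L (0, 1)).2

variable [CompleteSpace E]

theorem differentiable_shootingValue :
    Differentiable ℂ (shootingValue : (E × ℂ →L[ℂ] E × ℂ) → ℂ) := by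
  have hexp : Differentiable ℂ (NormedSpace.exp : (E × ℂ →L[ℂ] E × ℂ) → _) :=
    fun L ↦ (NormedSpace.exp_analytic (𝕂 := ℂ) L).differentiableAt
  exact (hexp.clm_apply (differentiable_const _)).snd

theorem differentiable_shootingValue_smul_add (D N : E × ℂ →L[ℂ] E × ℂ) :
    Differentiable ℂ (fun lam : ℂ ↦ shootingValue (lam • D + N)) :=
  differentiable_shootingValue.fun_comp (by fun_prop)

theorem IsTwoPointSolution.shootingValue_eq_zero {L : E × ℂ →L[ℂ] E × ℂ} {v : ℝ → E × ℂ}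
    (hv : IsTwoPointSolution L v) (hne : ∃ x ∈ Set.Icc (0 : ℝ) 1, v x ≠ 0) :
    shootingValue L = 0 := by
  obtain ⟨x, hx, hvx⟩ := hne
  have hflow := eqOn_exp_smul_apply_of_hasDerivWithinAt hv.hasDerivWithinAt
  have hinit : v 0 = (v 0).2 • ((0, 1) : E × ℂ) := by ext <;> simp [hv.fst_zero]
  have hne0 : (v 0).2 ≠ 0 := by
    intro h0
    rw [h0, zero_smul] at hinit
    exact hvx (by simp [hflow hx, hinit])
  have hone : (v 1).2 = (v 0).2 * shootingValue L := by
    calc (v 1).2 = (NormedSpace.exp L (v 0)).2 := by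
          simp [hflow (Set.right_mem_Icc.2 zero_le_one)]
      _ = (NormedSpace.exp L ((v 0).2 • (0, 1))).2 := by rw [← hinit]
      _ = (v 0).2 * shootingValue L := by rw [map_smul]; rfl
  exact (mul_eq_zero.1 (hone.symm.trans hv.snd_one)).resolve_left hne0

theorem isTwoPointSolution_exp_smul_apply {L : E × ℂ →L[ℂ] E × ℂ} (hL : shootingValue L = 0) :
    IsTwoPointSolution L (fun x ↦ NormedSpace.exp (x • L) (0, 1)) where
  hasDerivWithinAt x _ := (hasDerivAt_exp_smul_apply L (0, 1) x).hasDerivWithinAt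
  fst_zero := congrArg Prod.fst (exp_zero_smul_apply L (0, 1))
  snd_one := by simpa [shootingValue] using hL

end Shooting

section Energy

variable {E F : Type*} [NormedAddCommGroup E] [InnerProductSpace ℂ E]
  [NormedAddCommGroup F] [InnerProductSpace ℂ F]

/-- Half the derivative of the indefinite energy `‖v.2‖ ^ 2 - ‖v.1‖ ^ 2` along `v' = L v`. -/
noncomputable def energyRate (L : E × F →L[ℂ] E × F) (v : E × F) : ℝ :=
  (inner ℂ v.2 (L v).2).re - (inner ℂ v.1 (L v).1).re

theorem hasDerivWithinAt_energy {L : E × F →L[ℂ] E × F} {v : ℝ → E × F} {s : Set ℝ} {x : ℝ}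
    (hv : HasDerivWithinAt v (L (v x)) s x) :
    HasDerivWithinAt (fun t ↦ ‖(v t).2‖ ^ 2 - ‖(v t).1‖ ^ 2) (2 * energyRate L (v x)) s x := by
  have hfst : HasDerivWithinAt (fun t ↦ (v t).1) (L (v x)).1 s x :=
    hv.hasFDerivWithinAt.fst.hasDerivWithinAt.congr_deriv (by simp)
  have hsnd : HasDerivWithinAt (fun t ↦ (v t).2) (L (v x)).2 s x :=
    hv.hasFDerivWithinAt.snd.hasDerivWithinAt.congr_deriv (by simp)
  let := InnerProductSpace.rclikeToReal ℂ E
  let := InnerProductSpace.rclikeToReal ℂ F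
  exact (hsnd.norm_sq.sub hfst.norm_sq).congr_deriv (mul_sub _ _ _).symm

theorem IsTwoPointSolution.apply_zero_eq_zero {L : E × F →L[ℂ] E × F} {v : ℝ → E × F}
    (hv : IsTwoPointSolution L v) (hL : ∀ w, 0 ≤ energyRate L w) : v 0 = 0 := by
  have hderiv (x : ℝ) (hx : x ∈ Set.Icc (0 : ℝ) 1) :=
    hasDerivWithinAt_energy (hv.hasDerivWithinAt x hx)
  have hmono : MonotoneOn (fun t ↦ ‖(v t).2‖ ^ 2 - ‖(v t).1‖ ^ 2) (Set.Icc 0 1) :=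
    monotoneOn_of_hasDerivWithinAt_nonneg (convex_Icc 0 1)
      (fun x hx ↦ (hderiv x hx).continuousWithinAt)
      (fun x hx ↦ (hderiv x (interior_subset hx)).mono interior_subset)
      (fun x _ ↦ mul_nonneg zero_le_two (hL _))
  have hle : ‖(v 0).2‖ ^ 2 ≤ -‖(v 1).1‖ ^ 2 := by
    simpa [hv.fst_zero, hv.snd_one] using
      hmono (Set.left_mem_Icc.2 zero_le_one) (Set.right_mem_Icc.2 zero_le_one) zero_le_one
  have hsnd : (v 0).2 = 0 := by
    rw [← norm_eq_zero, ← sq_eq_zero_iff]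
    linarith [sq_nonneg ‖(v 0).2‖, sq_nonneg ‖(v 1).1‖]
  exact Prod.ext hv.fst_zero hsnd

theorem shootingValue_ne_zero_of_energyRate_nonneg [CompleteSpace E] {L : E × ℂ →L[ℂ] E × ℂ}
    (hL : ∀ w, 0 ≤ energyRate L w) : shootingValue L ≠ 0 := by
  intro h0
  have hinit : ((0, 1) : E × ℂ) = 0 := (exp_zero_smul_apply L (0, 1)).symm.trans
    ((isTwoPointSolution_exp_smul_apply h0).apply_zero_eq_zero hL)
  exact one_ne_zero (congrArg Prod.snd hinit)

theorem abs_energyRate_le (L : E × F →L[ℂ] E × F) (v : E × F) :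
    |energyRate L v| ≤ 2 * ‖L‖ * ‖v‖ ^ 2 := by
  have hsnd : |(inner ℂ v.2 (L v).2).re| ≤ ‖v‖ * (‖L‖ * ‖v‖) :=
    (abs_re_le_norm _).trans <| (norm_inner_le_norm _ _).trans <| mul_le_mul (norm_snd_le v)
      ((norm_snd_le _).trans (L.le_opNorm v)) (norm_nonneg _) (norm_nonneg _)
  have hfst : |(inner ℂ v.1 (L v).1).re| ≤ ‖v‖ * (‖L‖ * ‖v‖) :=
    (abs_re_le_norm _).trans <| (norm_inner_le_norm _ _).trans <| mul_le_mul (norm_fst_le v)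
      ((norm_fst_le _).trans (L.le_opNorm v)) (norm_nonneg _) (norm_nonneg _)
  calc |energyRate L v| ≤ |(inner ℂ v.2 (L v).2).re| + |(inner ℂ v.1 (L v).1).re| := abs_sub _ _
    _ ≤ 2 * ‖L‖ * ‖v‖ ^ 2 := by linarith

theorem energyRate_smul_add (t : ℝ) (D N : E × F →L[ℂ] E × F) (v : E × F) :
    energyRate (t • D + N) v = t * energyRate D v + energyRate N v := by
  simp only [energyRate, add_apply, smul_apply, Prod.fst_add, Prod.snd_add, Prod.smul_fst,
    Prod.smul_snd, inner_add_right, inner_smul_right_eq_smul, add_re, smul_re, smul_eq_mul]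
  ring

theorem exists_forall_energyRate_smul_add_nonneg {D : E × F →L[ℂ] E × F} {δ : ℝ} (hδ : 0 < δ)
    (hD : ∀ v, δ * ‖v‖ ^ 2 ≤ energyRate D v) (N : E × F →L[ℂ] E × F) :
    ∃ t : ℝ, ∀ v, 0 ≤ energyRate (t • D + N) v := by
  refine ⟨2 * ‖N‖ / δ, fun v ↦ ?_⟩
  have hN : -(2 * ‖N‖ * ‖v‖ ^ 2) ≤ energyRate N v := (abs_le.1 (abs_energyRate_le N v)).1
  have hD' : 2 * ‖N‖ * ‖v‖ ^ 2 ≤ 2 * ‖N‖ / δ * energyRate D v := by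
    calc 2 * ‖N‖ * ‖v‖ ^ 2 = 2 * ‖N‖ / δ * (δ * ‖v‖ ^ 2) := by field_simp
      _ ≤ 2 * ‖N‖ / δ * energyRate D v := by gcongr; exact hD v
  rw [energyRate_smul_add]
  linarith

end Energy

section Pencil

variable {E : Type*} [NormedAddCommGroup E] [InnerProductSpace ℂ E]

/-- The eigenvalues `lam` of the two-point boundary value problem for `v' = (lam • D + N) v`. -/
def twoPointEigenvalues (D N : E × ℂ →L[ℂ] E × ℂ) : Set ℂ :=
  {lam | ∃ v, IsTwoPointSolution (lam • D + N) v ∧ ∃ x ∈ Set.Icc (0 : ℝ) 1, v x ≠ 0}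

theorem finite_inter_twoPointEigenvalues [CompleteSpace E] {D : E × ℂ →L[ℂ] E × ℂ} {w : ℂ} {δ : ℝ}
    (hδ : 0 < δ) (hD : ∀ v, δ * ‖v‖ ^ 2 ≤ energyRate (w • D) v) (N : E × ℂ →L[ℂ] E × ℂ)
    {S : Set ℂ} (hS : Bornology.IsBounded S) : (S ∩ twoPointEigenvalues D N).Finite := by
  obtain ⟨t, ht⟩ := exists_forall_energyRate_smul_add_nonneg hδ hD N
  have hne : shootingValue ((t • w) • D + N) ≠ 0 := by
    rw [smul_assoc]
    exact shootingValue_ne_zero_of_energyRate_nonneg ht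
  refine (finite_inter_setOf_eq_zero_of_differentiable
    (differentiable_shootingValue_smul_add D N) hne hS).subset (Set.inter_subset_inter_right S ?_)
  rintro lam ⟨v, hv, hv0⟩
  exact hv.shootingValue_eq_zero hv0

end Pencil

section Counterflow

/-- The coefficient of `λ` in the eigenvalue equation `A v = λ v`, solved for `v'` as
`v' = (λ • transportPart u₁ u₂ + exchangePart u₁ u₂ c₁ c₂) v`, with `(v^h, v^c)` as a pair. -/
noncomputable def transportPart (u₁ u₂ : ℂ) : ℂ × ℂ →L[ℂ] ℂ × ℂ :=
  (-u₁⁻¹ • ContinuousLinearMap.fst ℂ ℂ ℂ).prod (u₂⁻¹ • ContinuousLinearMap.snd ℂ ℂ ℂ)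

/-- The `λ`-independent term of the eigenvalue equation `A v = λ v` solved for `v'`; it carries the
exchange between the two components. -/
noncomputable def exchangePart (u₁ u₂ c₁ c₂ : ℂ) : ℂ × ℂ →L[ℂ] ℂ × ℂ :=
  (-(c₁ / u₁) • (ContinuousLinearMap.fst ℂ ℂ ℂ - ContinuousLinearMap.snd ℂ ℂ ℂ)).prod
    (-(c₂ / u₂) • (ContinuousLinearMap.fst ℂ ℂ ℂ - ContinuousLinearMap.snd ℂ ℂ ℂ))

theorem eq_transportPart_add_exchangePart {u₁ u₂ c₁ c₂ lam : ℂ} (hu₁ : u₁ ≠ 0) (hu₂ : u₂ ≠ 0)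
    {h c h' c' : ℂ} (hh : -u₁ * h' - c₁ * (h - c) = lam * h)
    (hc : u₂ * c' + c₂ * (h - c) = lam * c) :
    (h', c') = (lam • transportPart u₁ u₂ + exchangePart u₁ u₂ c₁ c₂) (h, c) := by
  ext
  · simp only [transportPart, exchangePart, add_apply, smul_apply, sub_apply,
      ContinuousLinearMap.prod_apply, ContinuousLinearMap.coe_fst', ContinuousLinearMap.coe_snd',
      Prod.smul_mk, Prod.mk_add_mk, smul_eq_mul]
    field_simp
    linear_combination -hh
  · simp only [transportPart, exchangePart, add_apply, smul_apply, sub_apply,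
      ContinuousLinearMap.prod_apply, ContinuousLinearMap.coe_fst', ContinuousLinearMap.coe_snd',
      Prod.smul_mk, Prod.mk_add_mk, smul_eq_mul]
    field_simp
    linear_combination hc

theorem re_sqrt_pos_of_mem_slitPlane {z : ℂ} (hz : z ∈ slitPlane) : 0 < (sqrt z).re := by
  have hpos : 0 < ‖z‖ + z.re := by
    rcases mem_slitPlane_iff.1 hz with hre | him
    · positivity
    · linarith [neg_abs_le z.re, abs_re_lt_norm.2 him]
  rw [sqrt, cpow_inv_two_re]
  positivity

theorem exists_re_div_pos_of_div_mem_slitPlane {z₁ z₂ : ℂ} (h : z₁ / z₂ ∈ slitPlane) :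
    ∃ w : ℂ, 0 < (w / z₁).re ∧ 0 < (w / z₂).re := by
  obtain ⟨hz₁, -⟩ := div_ne_zero_iff.1 (slitPlane_ne_zero h)
  have hre : 0 < (sqrt (z₁ / z₂)).re := re_sqrt_pos_of_mem_slitPlane h
  have hne : sqrt (z₁ / z₂) ≠ 0 := fun h0 ↦ by simp [h0] at hre
  -- This `w` is a square root of `z₁ * z₂`, pointing along the bisector of the angle they span.
  refine ⟨z₁ / sqrt (z₁ / z₂), ?_, ?_⟩
  · rw [div_div_cancel_left' hz₁, inv_re]
    exact div_pos hre (normSq_pos.2 hne)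
  · have hsq : sqrt (z₁ / z₂) ^ 2 = z₁ / z₂ := cpow_nat_inv_pow _ two_ne_zero
    rwa [div_right_comm, (div_eq_iff hne).2 (hsq.symm.trans (sq _))]

theorem energyRate_smul_transportPart (u₁ u₂ w : ℂ) (v : ℂ × ℂ) :
    energyRate (w • transportPart u₁ u₂) v =
      (w / u₁).re * ‖v.1‖ ^ 2 + (w / u₂).re * ‖v.2‖ ^ 2 := by
  have hre (z a : ℂ) : (inner ℂ a (z * a)).re = z.re * ‖a‖ ^ 2 := by
    rw [RCLike.inner_apply, mul_assoc, mul_conj', ← ofReal_pow, re_mul_ofReal]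
  have happly : (w • transportPart u₁ u₂) v = (-(w / u₁) * v.1, w / u₂ * v.2) := by
    ext <;> simp [transportPart, div_eq_mul_inv, mul_assoc]
  rw [energyRate, happly, hre, hre, neg_re]
  ring

theorem exists_forall_le_energyRate_smul_transportPart {u₁ u₂ w : ℂ} (h₁ : 0 < (w / u₁).re)
    (h₂ : 0 < (w / u₂).re) :
    ∃ δ > 0, ∀ v, δ * ‖v‖ ^ 2 ≤ energyRate (w • transportPart u₁ u₂) v := by
  refine ⟨min (w / u₁).re (w / u₂).re, lt_min h₁ h₂, fun v ↦ ?_⟩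
  have hnorm : ‖v‖ ^ 2 ≤ ‖v.1‖ ^ 2 + ‖v.2‖ ^ 2 := by
    rcases le_total ‖v.1‖ ‖v.2‖ with h | h
    · simp [Prod.norm_def, h]
    · simp [Prod.norm_def, h]
  calc min (w / u₁).re (w / u₂).re * ‖v‖ ^ 2
      ≤ min (w / u₁).re (w / u₂).re * (‖v.1‖ ^ 2 + ‖v.2‖ ^ 2) := by gcongr
    _ ≤ (w / u₁).re * ‖v.1‖ ^ 2 + (w / u₂).re * ‖v.2‖ ^ 2 := by
        rw [mul_add]
        gcongr
        exacts [min_le_left _ _, min_le_right _ _]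
    _ = energyRate (w • transportPart u₁ u₂) v := (energyRate_smul_transportPart u₁ u₂ w v).symm

end Counterflow

theorem finitely_many_eigenvalues_in_bounded_regions_general {u₁ u₂ : ℂ}
    (hu : u₁ / u₂ ∈ slitPlane) (c₁ c₂ : ℂ) {S : Set ℂ} (hS : Bornology.IsBounded S) :
    Set.Finite {lam : ℂ | lam ∈ S ∧
      ∃ vh vc vh' vc' : ℝ → ℂ,
        (∀ x ∈ Set.Icc (0 : ℝ) 1, HasDerivWithinAt vh (vh' x) (Set.Icc 0 1) x) ∧
        (∀ x ∈ Set.Icc (0 : ℝ) 1, HasDerivWithinAt vc (vc' x) (Set.Icc 0 1) x) ∧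
        vh 0 = 0 ∧ vc 1 = 0 ∧
        (∀ x ∈ Set.Icc (0 : ℝ) 1,
          -u₁ * vh' x - c₁ * (vh x - vc x) = lam * vh x ∧
          u₂ * vc' x + c₂ * (vh x - vc x) = lam * vc x) ∧
        (∃ x ∈ Set.Icc (0 : ℝ) 1, vh x ≠ 0 ∨ vc x ≠ 0)} := by
  obtain ⟨hu₁, hu₂⟩ := div_ne_zero_iff.1 (slitPlane_ne_zero hu)
  obtain ⟨w, hw₁, hw₂⟩ := exists_re_div_pos_of_div_mem_slitPlane hu
  obtain ⟨δ, hδ, hcoercive⟩ := exists_forall_le_energyRate_smul_transportPart hw₁ hw₂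
  refine (finite_inter_twoPointEigenvalues hδ hcoercive (exchangePart u₁ u₂ c₁ c₂) hS).subset ?_
  rintro lam ⟨hlam, vh, vc, vh', vc', hvh, hvc, hvh0, hvc1, hode, x, hx, hvx⟩
  refine ⟨hlam, fun t ↦ (vh t, vc t), ⟨fun t ht ↦ ?_, hvh0, hvc1⟩, x, hx, ?_⟩
  · rw [← eq_transportPart_add_exchangePart hu₁ hu₂ (hode t ht).1 (hode t ht).2]
    exact (hvh t ht).prodMk (hvc t ht)
  · simpa [Prod.ext_iff, imp_iff_not_or] using hvx

/-- in any bounded region of the complex plane, `A` admits only finitely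
many eigenvalues: for every `R > 0`, the set of `λ` with `|λ| ≤ R` admitting a nonzero
differentiable eigenfunction `v` with `v^h(0) = 0`, `v^c(1) = 0` is finite. -/
theorem finitely_many_eigenvalues_in_bounded_regions
    (u₁ u₂ c₁ c₂ : ℝ) (hu₁ : 0 < u₁) (hu₂ : 0 < u₂) (hc₁ : 0 < c₁) (hc₂ : 0 < c₂)
    (R : ℝ) (hR : 0 < R) :
    Set.Finite {lam : ℂ | ‖lam‖ ≤ R ∧
      ∃ vh vc vh' vc' : ℝ → ℂ,
        (∀ x ∈ Set.Icc (0:ℝ) 1, HasDerivAt vh (vh' x) x) ∧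
        (∀ x ∈ Set.Icc (0:ℝ) 1, HasDerivAt vc (vc' x) x) ∧
        vh 0 = 0 ∧ vc 1 = 0 ∧
        (∀ x ∈ Set.Icc (0:ℝ) 1,
          -(u₁ : ℂ) * vh' x - (c₁ : ℂ) * (vh x - vc x) = lam * vh x ∧
          (u₂ : ℂ) * vc' x + (c₂ : ℂ) * (vh x - vc x) = lam * vc x) ∧
        (∃ x ∈ Set.Icc (0:ℝ) 1, vh x ≠ 0 ∨ vc x ≠ 0)} := by
  have hu : (u₁ : ℂ) / u₂ ∈ slitPlane := by
    rw [← ofReal_div, ofReal_mem_slitPlane]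
    positivity
  refine (finitely_many_eigenvalues_in_bounded_regions_general hu c₁ c₂
    (Metric.isBounded_closedBall (x := 0) (r := R))).subset ?_
  rintro lam ⟨hlam, vh, vc, vh', vc', hvh, hvc, hv⟩
  exact ⟨mem_closedBall_zero_iff.2 hlam, vh, vc, vh', vc',
    fun x hx ↦ (hvh x hx).hasDerivWithinAt, fun x hx ↦ (hvc x hx).hasDerivWithinAt, hv⟩
end

section
/- Fix λ₀ > 0. Let ξ = (ξ^h, ξ^c) : [0,1] × [0,∞) → ℂ² be continuously differentiable and satisfy the shifted error system ∂_t ξ^h = −u₁ ∂_x ξ^h − c₁(ξ^h − ξ^c) + λ₀ ξ^h and ∂_t ξ^c = u₂ ∂_x ξ^c + c₂(ξ^h − ξ^c) + λ₀ ξ^c for all (x,t) ∈ (0,1) × (0,∞), together with the boundary conditions ξ^h(0,t) = 0 and ξ^c(1,t) = 0 for all t ≥ 0. Then for every t > 0, (d/dt) ∫₀¹ (|ξ^h(x,t)|² + |ξ^c(x,t)|²) dx ≤ (2|M|₂ + 2λ₀) ∫₀¹ (|ξ^h(x,t)|² + |ξ^c(x,t)|²) dx − u₂ |ξ^c(0,t)|²,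 where |M|₂ is the spectral norm of M = [[−c₁, c₁], [c₂, −c₂]]. (The paper states this differential inequality, up to the shift coefficient, as inequality (276) in the proof of Theorem 2.) -/
/-!
Each component of the system solves a transport equation `∂ₜ f = k ∂ₓ f + r`, for which
`∂ₜ ‖f‖² = ∂ₓ (k ‖f‖²) + 2 ⟪f, r⟫`. Integrating over space gives the energy balance
`d/dt ∫ ‖f‖² = [k ‖f‖²] + 2 ∫ ⟪f, r⟫`. Adding the balances of both components, the boundary
conditions leave the flux terms `-u₁ ‖ξ^h(1,t)‖² - u₂ ‖ξ^c(0,t)‖²`, and the source terms form the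
quadratic form of `M ⊗ id`. The latter is bounded by `|M|₂`, since `2 |M|₂ I - M - Mᵀ` is positive
semidefinite and by the Schur product theorem stays so after entrywise multiplication with a
Gram matrix.
-/

open MeasureTheory intervalIntegral Set

/-- The spectral (operator) norm of the coupling matrix `M = [[−c₁, c₁], [c₂, −c₂]]`. -/
noncomputable def specNormM (c₁ c₂ : ℝ) : ℝ :=
  ‖Matrix.toEuclideanCLM (𝕜 := ℝ) !![-c₁, c₁; c₂, -c₂]‖

open Function
open scoped Matrix RealInnerProductSpace Topology

section MatrixQuadraticForm

variable {ι : Type*} [Fintype ι] [DecidableEq ι]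

theorem dotProduct_mulVec_le_norm_toEuclideanCLM (A : Matrix ι ι ℝ) (v : ι → ℝ) :
    v ⬝ᵥ A *ᵥ v ≤ ‖Matrix.toEuclideanCLM (𝕜 := ℝ) A‖ * (v ⬝ᵥ v) := by
  set T := Matrix.toEuclideanCLM (𝕜 := ℝ) A
  set w : EuclideanSpace ℝ ι := WithLp.toLp 2 v
  calc v ⬝ᵥ A *ᵥ v = ⟪w, T w⟫ := (Matrix.inner_toEuclideanCLM A w w).symm
    _ ≤ ‖w‖ * ‖T w‖ := real_inner_le_norm w (T w)
    _ ≤ ‖w‖ * (‖T‖ * ‖w‖) := by gcongr; exact T.le_opNorm w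
    _ = ‖T‖ * (v ⬝ᵥ v) := by
      have hw : ‖w‖ ^ 2 = v ⬝ᵥ v := by
        rw [EuclideanSpace.real_norm_sq_eq]; simp [w, dotProduct, sq]
      rw [← hw]; ring

theorem posSemidef_two_norm_smul_one_sub_add_transpose (A : Matrix ι ι ℝ) :
    ((2 * ‖Matrix.toEuclideanCLM (𝕜 := ℝ) A‖) • (1 : Matrix ι ι ℝ) - (A + Aᵀ)).PosSemidef := by
  refine .of_dotProduct_mulVec_nonneg ?_ fun v => ?_
  · simp [Matrix.IsHermitian, Matrix.conjTranspose_eq_transpose_of_trivial, add_comm]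
  · have hA := dotProduct_mulVec_le_norm_toEuclideanCLM A v
    have hAT : v ⬝ᵥ Aᵀ *ᵥ v = v ⬝ᵥ A *ᵥ v := by
      rw [Matrix.mulVec_transpose, dotProduct_comm, Matrix.dotProduct_mulVec]
    simp only [star_trivial, Matrix.sub_mulVec, Matrix.add_mulVec, Matrix.smul_mulVec,
      Matrix.one_mulVec, dotProduct_sub, dotProduct_add, dotProduct_smul, smul_eq_mul, hAT]
    linarith

theorem sum_inner_sum_smul_le_norm_toEuclideanCLM {E : Type*} [NormedAddCommGroup E]
    [InnerProductSpace ℝ E] (A : Matrix ι ι ℝ) (v : ι → E) :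
    ∑ i, ⟪v i, ∑ j, A i j • v j⟫ ≤ ‖Matrix.toEuclideanCLM (𝕜 := ℝ) A‖ * ∑ i, ‖v i‖ ^ 2 := by
  have hsymm : ∑ i, ∑ j, A j i * ⟪v i, v j⟫ = ∑ i, ∑ j, A i j * ⟪v i, v j⟫ := by
    rw [Finset.sum_comm]
    simp only [real_inner_comm]
  have schur : ∑ i, ∑ j, A i j * ⟪v i, v j⟫ + ∑ i, ∑ j, A i j * ⟪v i, v j⟫ ≤
      2 * ‖Matrix.toEuclideanCLM (𝕜 := ℝ) A‖ * ∑ i, ‖v i‖ ^ 2 := by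
    have hpsd := (posSemidef_two_norm_smul_one_sub_add_transpose A).hadamard
      (Matrix.posSemidef_gram ℝ v)
    simpa [dotProduct, Matrix.mulVec, Matrix.gram, Matrix.one_apply, sub_mul, add_mul,
      Finset.sum_add_distrib, hsymm, ← Finset.mul_sum] using hpsd.dotProduct_mulVec_nonneg 1
  simp only [inner_sum, real_inner_smul_right]
  linarith

end MatrixQuadraticForm

theorem inner_add_inner_le_specNormM {E : Type*} [NormedAddCommGroup E] [InnerProductSpace ℝ E]
    (c₁ c₂ : ℝ) (h c : E) :
    ⟪h, -(c₁ • (h - c))⟫ + ⟪c, c₂ • (h - c)⟫ ≤ specNormM c₁ c₂ * (‖h‖ ^ 2 + ‖c‖ ^ 2) := by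
  have key := sum_inner_sum_smul_le_norm_toEuclideanCLM !![-c₁, c₁; c₂, -c₂] ![h, c]
  have row_h : -(c₁ • (h - c)) = -c₁ • h + c₁ • c := by module
  have row_c : c₂ • (h - c) = c₂ • h + -c₂ • c := by module
  rw [row_h, row_c]
  simpa [specNormM, Fin.sum_univ_two] using key

theorem hasDerivAt_intervalIntegral_of_continuousOn_prod {𝕜 E : Type*} [RCLike 𝕜]
    [NormedAddCommGroup E] [NormedSpace ℝ E] [NormedSpace 𝕜 E] {f f' : ℝ → 𝕜 → E} {a b : ℝ}
    {s : Set 𝕜} {t : 𝕜} (hs : s ∈ 𝓝 t)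
    (hf : ∀ τ ∈ s, ContinuousOn (fun x => f x τ) (uIcc a b))
    (hf' : ContinuousOn (uncurry f') (uIcc a b ×ˢ s))
    (hderiv : ∀ x ∈ uIcc a b, ∀ τ ∈ s, HasDerivWithinAt (f x) (f' x τ) s τ) :
    HasDerivAt (fun τ => ∫ x in a..b, f x τ) (∫ x in a..b, f' x t) t := by
  obtain ⟨K, hKt, hKs, hK⟩ := local_compact_nhds hs
  obtain ⟨C, hC⟩ := (isCompact_uIcc.prod hK).exists_bound_of_continuousOn
    (hf'.mono (prod_mono_right hKs))
  refine (intervalIntegral.hasDerivAt_integral_of_dominated_loc_of_deriv_le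
    (F := fun τ x => f x τ) (F' := fun τ x => f' x τ) (bound := fun _ => C)
    (interior_mem_nhds.2 hKt) ?_ (hf t (mem_of_mem_nhds hs)).intervalIntegrable ?_ ?_
    intervalIntegrable_const ?_).2
  · filter_upwards [hs] with τ hτ
    exact (hf τ hτ).intervalIntegrable.def'.aestronglyMeasurable
  · exact (hf'.uncurry_right t (mem_of_mem_nhds hs)).intervalIntegrable.def'.aestronglyMeasurable
  · exact .of_forall fun x hx τ hτ => hC (x, τ) ⟨uIoc_subset_uIcc hx, interior_subset hτ⟩
  · refine .of_forall fun x hx τ hτ => ?_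
    have hKτ : K ∈ 𝓝 τ := mem_interior_iff_mem_nhds.1 hτ
    exact (hderiv x (uIoc_subset_uIcc hx) τ (hKs (interior_subset hτ))).hasDerivAt
      (Filter.mem_of_superset hKτ hKs)

section TransportEnergy

variable {E : Type*} [NormedAddCommGroup E] [InnerProductSpace ℝ E] {a b : ℝ}

theorem hasDerivAt_integral_norm_sq {f ft : ℝ → ℝ → E} {s : Set ℝ} {t : ℝ} (hs : s ∈ 𝓝 t)
    (hf : ContinuousOn (uncurry f) (uIcc a b ×ˢ s))
    (hft : ContinuousOn (uncurry ft) (uIcc a b ×ˢ s))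
    (hderiv : ∀ x ∈ uIcc a b, ∀ τ ∈ s, HasDerivWithinAt (f x) (ft x τ) s τ) :
    HasDerivAt (fun τ => ∫ x in a..b, ‖f x τ‖ ^ 2) (∫ x in a..b, 2 * ⟪f x t, ft x t⟫) t :=
  hasDerivAt_intervalIntegral_of_continuousOn_prod hs
    (f := fun x τ => ‖f x τ‖ ^ 2) (f' := fun x τ => 2 * ⟪f x τ, ft x τ⟫)
    (fun τ hτ => (hf.uncurry_right τ hτ).norm.pow 2) ((hf.inner (𝕜 := ℝ) hft).const_mul 2)
    (fun x hx τ hτ => (hderiv x hx τ hτ).norm_sq)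

theorem integral_two_mul_inner_of_transport {f fx ft r : ℝ → E} {k : ℝ} (hab : a ≤ b)
    (hf : ContinuousOn f (Icc a b)) (hft : ContinuousOn ft (Icc a b))
    (hr : ContinuousOn r (Icc a b)) (hderiv : ∀ x ∈ Ioo a b, HasDerivAt f (fx x) x)
    (htransport : ∀ x ∈ Ioo a b, ft x = k • fx x + r x) :
    ∫ x in a..b, 2 * ⟪f x, ft x⟫ =
      k * (‖f b‖ ^ 2 - ‖f a‖ ^ 2) + 2 * ∫ x in a..b, ⟪f x, r x⟫ := by
  have int_ft := ((hf.inner (𝕜 := ℝ) hft).const_mul 2).intervalIntegrable_of_Icc (μ := volume) hab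
  have int_r := ((hf.inner (𝕜 := ℝ) hr).const_mul 2).intervalIntegrable_of_Icc (μ := volume) hab
  have flux_deriv : ∀ x ∈ Ioo a b, HasDerivAt (fun y => k * ‖f y‖ ^ 2)
      (2 * ⟪f x, ft x⟫ - 2 * ⟪f x, r x⟫) x := fun x hx => by
    refine ((hderiv x hx).norm_sq.const_mul k).congr_deriv ?_
    rw [htransport x hx, inner_add_right, real_inner_smul_right]
    ring
  have flux := integral_eq_sub_of_hasDerivAt_of_le hab (f := fun x => k * ‖f x‖ ^ 2)
    ((hf.norm.pow 2).const_mul k) flux_deriv (int_ft.sub int_r)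
  rw [intervalIntegral.integral_sub int_ft int_r,
    intervalIntegral.integral_const_mul 2 fun x => ⟪f x, r x⟫] at flux
  linarith

theorem hasDerivAt_integral_norm_sq_of_transport {f ft : ℝ → ℝ → E} {fx r : ℝ → E} {k t : ℝ}
    {s : Set ℝ} (hab : a ≤ b) (hs : s ∈ 𝓝 t)
    (hf : ContinuousOn (uncurry f) (Icc a b ×ˢ s))
    (hft : ContinuousOn (uncurry ft) (Icc a b ×ˢ s)) (hr : ContinuousOn r (Icc a b))
    (hderiv_t : ∀ x ∈ Icc a b, ∀ τ ∈ s, HasDerivWithinAt (f x) (ft x τ) s τ)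
    (hderiv_x : ∀ x ∈ Ioo a b, HasDerivAt (fun y => f y t) (fx x) x)
    (htransport : ∀ x ∈ Ioo a b, ft x t = k • fx x + r x) :
    HasDerivAt (fun τ => ∫ x in a..b, ‖f x τ‖ ^ 2)
      (k * (‖f b t‖ ^ 2 - ‖f a t‖ ^ 2) + 2 * ∫ x in a..b, ⟪f x t, r x⟫) t := by
  have ht : t ∈ s := mem_of_mem_nhds hs
  rw [← integral_two_mul_inner_of_transport hab (hf.uncurry_right t ht) (hft.uncurry_right t ht)
    hr hderiv_x htransport]
  rw [← uIcc_of_le hab] at hf hft hderiv_t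
  exact hasDerivAt_integral_norm_sq hs hf hft hderiv_t

theorem integral_inner_shifted_coupling_le {h c : ℝ → E} (c₁ c₂ lam0 : ℝ) (hab : a ≤ b)
    (hh : ContinuousOn h (Icc a b)) (hc : ContinuousOn c (Icc a b)) :
    (∫ x in a..b, ⟪h x, -(c₁ • (h x - c x)) + lam0 • h x⟫) +
        ∫ x in a..b, ⟪c x, c₂ • (h x - c x) + lam0 • c x⟫ ≤
      (specNormM c₁ c₂ + lam0) * ∫ x in a..b, (‖h x‖ ^ 2 + ‖c x‖ ^ 2) := by
  have int_h : IntervalIntegrable (fun x => ⟪h x, -(c₁ • (h x - c x)) + lam0 • h x⟫) volume a b :=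
    ContinuousOn.intervalIntegrable_of_Icc hab (by fun_prop)
  have int_c : IntervalIntegrable (fun x => ⟪c x, c₂ • (h x - c x) + lam0 • c x⟫) volume a b :=
    ContinuousOn.intervalIntegrable_of_Icc hab (by fun_prop)
  rw [← intervalIntegral.integral_add int_h int_c, ← intervalIntegral.integral_const_mul]
  refine intervalIntegral.integral_mono_on hab (int_h.add int_c)
    (ContinuousOn.intervalIntegrable_of_Icc hab (by fun_prop)) fun x _ => ?_
  have coupling := inner_add_inner_le_specNormM c₁ c₂ (h x) (c x)
  simp only [inner_add_right, real_inner_smul_right, real_inner_self_eq_norm_sq] at coupling ⊢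
  linarith

theorem shifted_energy_differential_inequality_general {ξh ξc ξht ξct : ℝ → ℝ → E}
    {ξhx ξcx : ℝ → E} {u₁ u₂ c₁ c₂ lam0 t : ℝ} {s : Set ℝ} (hu₁ : 0 ≤ u₁) (hab : a ≤ b)
    (hs : s ∈ 𝓝 t)
    (hch : ContinuousOn (uncurry ξh) (Icc a b ×ˢ s))
    (hcc : ContinuousOn (uncurry ξc) (Icc a b ×ˢ s))
    (hcht : ContinuousOn (uncurry ξht) (Icc a b ×ˢ s))
    (hcct : ContinuousOn (uncurry ξct) (Icc a b ×ˢ s))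
    (hdhx : ∀ x ∈ Icc a b, HasDerivWithinAt (fun y => ξh y t) (ξhx x) (Icc a b) x)
    (hdht : ∀ x ∈ Icc a b, ∀ τ ∈ s, HasDerivWithinAt (ξh x) (ξht x τ) s τ)
    (hdcx : ∀ x ∈ Icc a b, HasDerivWithinAt (fun y => ξc y t) (ξcx x) (Icc a b) x)
    (hdct : ∀ x ∈ Icc a b, ∀ τ ∈ s, HasDerivWithinAt (ξc x) (ξct x τ) s τ)
    (hpde : ∀ x ∈ Ioo a b,
      ξht x t = -u₁ • ξhx x - c₁ • (ξh x t - ξc x t) + lam0 • ξh x t ∧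
      ξct x t = u₂ • ξcx x + c₂ • (ξh x t - ξc x t) + lam0 • ξc x t)
    (hbc : ξh a t = 0 ∧ ξc b t = 0) :
    ∃ d : ℝ,
      HasDerivAt (fun τ => ∫ x in a..b, (‖ξh x τ‖ ^ 2 + ‖ξc x τ‖ ^ 2)) d t ∧
      d ≤ (2 * specNormM c₁ c₂ + 2 * lam0) * (∫ x in a..b, (‖ξh x t‖ ^ 2 + ‖ξc x t‖ ^ 2))
        - u₂ * ‖ξc a t‖ ^ 2 := by
  have hh := hch.uncurry_right t (mem_of_mem_nhds hs)
  have hc := hcc.uncurry_right t (mem_of_mem_nhds hs)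
  have energy_h := hasDerivAt_integral_norm_sq_of_transport
    (r := fun x => -(c₁ • (ξh x t - ξc x t)) + lam0 • ξh x t) (k := -u₁) hab hs hch hcht
    (by fun_prop) hdht
    (fun x hx => (hdhx x (Ioo_subset_Icc_self hx)).hasDerivAt (Icc_mem_nhds hx.1 hx.2))
    (fun x hx => by rw [(hpde x hx).1]; abel)
  have energy_c := hasDerivAt_integral_norm_sq_of_transport
    (r := fun x => c₂ • (ξh x t - ξc x t) + lam0 • ξc x t) (k := u₂) hab hs hcc hcct
    (by fun_prop) hdct
    (fun x hx => (hdcx x (Ioo_subset_Icc_self hx)).hasDerivAt (Icc_mem_nhds hx.1 hx.2))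
    (fun x hx => by rw [(hpde x hx).2, add_assoc])
  refine ⟨_, (energy_h.add energy_c).congr_of_eventuallyEq ?_, ?_⟩
  · filter_upwards [hs] with τ hτ
    exact intervalIntegral.integral_add
      (((hch.uncurry_right τ hτ).norm.pow 2).intervalIntegrable_of_Icc hab)
      (((hcc.uncurry_right τ hτ).norm.pow 2).intervalIntegrable_of_Icc hab)
  · have source := integral_inner_shifted_coupling_le c₁ c₂ lam0 hab hh hc
    have outflow : 0 ≤ u₁ * ‖ξh b t‖ ^ 2 := by positivity
    rw [hbc.1, hbc.2, norm_zero]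
    linarith

end TransportEnergy

/-- along any `C¹` solution `ξ` of the shifted error system with
boundary conditions `ξ^h(0,t) = 0`, `ξ^c(1,t) = 0`, the `L²` energy satisfies, for
every `t > 0`,
`(d/dt) ∫₀¹ |ξ(x,t)|² dx ≤ (2|M|₂ + 2λ₀) ∫₀¹ |ξ(x,t)|² dx − u₂ |ξ^c(0,t)|²`. -/
theorem shifted_energy_differential_inequality
    (u₁ u₂ c₁ c₂ lam0 : ℝ) (hu₁ : 0 < u₁) (hu₂ : 0 < u₂) (hc₁ : 0 < c₁) (hc₂ : 0 < c₂)
    (hlam0 : 0 < lam0)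
    (ξh ξc ξhx ξht ξcx ξct : ℝ → ℝ → ℂ)
    -- `ξ` is continuously differentiable on `[0,1] × [0,∞)` with partial derivatives
    -- `ξhx, ξht, ξcx, ξct`:
    (hch : ContinuousOn (fun p : ℝ × ℝ => ξh p.1 p.2) (Icc 0 1 ×ˢ Ici 0))
    (hcc : ContinuousOn (fun p : ℝ × ℝ => ξc p.1 p.2) (Icc 0 1 ×ˢ Ici 0))
    (hchx : ContinuousOn (fun p : ℝ × ℝ => ξhx p.1 p.2) (Icc 0 1 ×ˢ Ici 0))
    (hcht : ContinuousOn (fun p : ℝ × ℝ => ξht p.1 p.2) (Icc 0 1 ×ˢ Ici 0))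
    (hccx : ContinuousOn (fun p : ℝ × ℝ => ξcx p.1 p.2) (Icc 0 1 ×ˢ Ici 0))
    (hcct : ContinuousOn (fun p : ℝ × ℝ => ξct p.1 p.2) (Icc 0 1 ×ˢ Ici 0))
    (hdhx : ∀ t ∈ Ici (0:ℝ), ∀ x ∈ Icc (0:ℝ) 1,
      HasDerivWithinAt (fun s => ξh s t) (ξhx x t) (Icc 0 1) x)
    (hdht : ∀ x ∈ Icc (0:ℝ) 1, ∀ t ∈ Ici (0:ℝ),
      HasDerivWithinAt (fun s => ξh x s) (ξht x t) (Ici 0) t)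
    (hdcx : ∀ t ∈ Ici (0:ℝ), ∀ x ∈ Icc (0:ℝ) 1,
      HasDerivWithinAt (fun s => ξc s t) (ξcx x t) (Icc 0 1) x)
    (hdct : ∀ x ∈ Icc (0:ℝ) 1, ∀ t ∈ Ici (0:ℝ),
      HasDerivWithinAt (fun s => ξc x s) (ξct x t) (Ici 0) t)
    -- the shifted error PDE on `(0,1) × (0,∞)`:
    (hpde : ∀ x ∈ Ioo (0:ℝ) 1, ∀ t ∈ Ioi (0:ℝ),
      ξht x t = -(u₁ : ℂ) * ξhx x t - (c₁ : ℂ) * (ξh x t - ξc x t) + (lam0 : ℂ) * ξh x t ∧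
      ξct x t = (u₂ : ℂ) * ξcx x t + (c₂ : ℂ) * (ξh x t - ξc x t) + (lam0 : ℂ) * ξc x t)
    -- boundary conditions:
    (hbc : ∀ t : ℝ, 0 ≤ t → ξh 0 t = 0 ∧ ξc 1 t = 0) :
    ∀ t : ℝ, 0 < t →
      ∃ d : ℝ,
        HasDerivAt (fun s => ∫ x in (0:ℝ)..1, (‖ξh x s‖ ^ 2 + ‖ξc x s‖ ^ 2)) d t ∧
        d ≤ (2 * specNormM c₁ c₂ + 2 * lam0)
              * (∫ x in (0:ℝ)..1, (‖ξh x t‖ ^ 2 + ‖ξc x t‖ ^ 2))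
            - u₂ * ‖ξc 0 t‖ ^ 2 := by
  intro t ht
  exact shifted_energy_differential_inequality_general hu₁.le zero_le_one (Ici_mem_nhds ht)
    hch hcc hcht hcct (hdhx t ht.le) hdht (hdcx t ht.le) hdct
    (fun x hx => by simpa using hpde x hx t ht) (hbc t ht.le)
end

section
/- Fix λ₀ > 0. Let ξ = (ξ^h, ξ^c) : [0,1] × [0,∞) → ℂ² be continuously differentiable and satisfy ∂_t ξ^h = −u₁ ∂_x ξ^h − c₁(ξ^h − ξ^c) + λ₀ ξ^h and ∂_t ξ^c = u₂ ∂_x ξ^c + c₂(ξ^h − ξ^c) + λ₀ ξ^c on (0,1) × (0,∞), with ξ^h(0,t) = 0 and ξ^c(1,t) = 0 for all t ≥ 0. If ∫₀^∞ ∫₀¹ (|ξ^h(x,t)|² + |ξ^c(x,t)|²) dx dt < ∞, then the boundary trace t ↦ ξ^c(0,t) is square-integrable on (0,∞) and u₂ ∫₀^∞ |ξ^c(0,t)|² dt ≤ (2|M|₂ + 2λ₀) ∫₀^∞ ∫₀¹ (|ξ^h(x,t)|² + |ξ^c(x,t)|²) dx dt + ∫₀¹ (|ξ^h(x,0)|²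 + |ξ^c(x,0)|²) dx, where |M|₂ is the spectral norm of M = [[−c₁, c₁], [c₂, −c₂]]. -/
open MeasureTheory intervalIntegral Set

/-!
Pairing the equations with `ξ^h` and `ξ^c` shows that the energy density `e = |ξ^h|² + |ξ^c|²`
satisfies `∂ₜe ≤ ∂ₓ(-u₁|ξ^h|² + u₂|ξ^c|²) + (2|M|₂ + 2λ₀)e`, because the quadratic form of `M` is
bounded by its spectral norm. Integrating over `[0,1] × [0,T]` turns the flux into boundary terms,
of which the boundary conditions leave `-u₂|ξ^c(0,t)|²` and a nonpositive one. This bounds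
`u₂ ∫₀ᵀ |ξ^c(0,t)|² dt` by a quantity that converges as `T → ∞`.
-/

section QuadraticForm

open Matrix
open scoped RealInnerProductSpace

variable {n : Type*} [Fintype n] [DecidableEq n]

theorem dotProduct_mulVec_self_le (A : Matrix n n ℝ) (x : n → ℝ) :
    x ⬝ᵥ A *ᵥ x ≤ ‖toEuclideanCLM (𝕜 := ℝ) A‖ * ∑ i, x i ^ 2 := by
  let v : EuclideanSpace ℝ n := WithLp.toLp 2 x
  let L := toEuclideanCLM (𝕜 := ℝ) A
  calc x ⬝ᵥ A *ᵥ x = ⟪v, L v⟫ := (inner_toEuclideanCLM A v v).symm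
    _ ≤ ‖v‖ * ‖L v‖ := real_inner_le_norm v (L v)
    _ ≤ ‖v‖ * (‖L‖ * ‖v‖) := by gcongr; exact L.le_opNorm v
    _ = ‖L‖ * ‖v‖ ^ 2 := by ring
    _ = ‖L‖ * ∑ i, x i ^ 2 := by rw [EuclideanSpace.real_norm_sq_eq]

-- In an orthonormal basis of the span of the `v i`, the claim is the scalar inequality summed over
-- coordinates.
theorem sum_inner_sum_smul_le {E : Type*} [NormedAddCommGroup E] [InnerProductSpace ℝ E]
    (A : Matrix n n ℝ) (v : n → E) :
    ∑ i, ⟪v i, ∑ j, A i j • v j⟫ ≤ ‖toEuclideanCLM (𝕜 := ℝ) A‖ * ∑ i, ‖v i‖ ^ 2 := by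
  let S := Submodule.span ℝ (range v)
  let w (i : n) : S := ⟨v i, Submodule.subset_span (mem_range_self i)⟩
  have : FiniteDimensional ℝ S := FiniteDimensional.span_of_finite ℝ (finite_range v)
  let b := stdOrthonormalBasis ℝ S
  calc ∑ i, ⟪v i, ∑ j, A i j • v j⟫
      = ∑ i, ⟪w i, ∑ j, A i j • w j⟫ := by
        simp only [Submodule.coe_inner, Submodule.coe_sum, Submodule.coe_smul, w]
    _ = ∑ i, ∑ k, ⟪w i, b k⟫ * ⟪b k, ∑ j, A i j • w j⟫ := by
        simp only [b.sum_inner_mul_inner]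
    _ = ∑ k, (fun i => ⟪b k, w i⟫) ⬝ᵥ A *ᵥ (fun i => ⟪b k, w i⟫) := by
        rw [Finset.sum_comm]
        simp only [dotProduct, mulVec, inner_sum, real_inner_smul_right, real_inner_comm (b _)]
    _ ≤ ∑ k, ‖toEuclideanCLM (𝕜 := ℝ) A‖ * ∑ i, ⟪b k, w i⟫ ^ 2 :=
        Finset.sum_le_sum fun k _ => dotProduct_mulVec_self_le A _
    _ = ‖toEuclideanCLM (𝕜 := ℝ) A‖ * ∑ i, ∑ k, ⟪b k, w i⟫ ^ 2 := by
        rw [← Finset.mul_sum, Finset.sum_comm]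
    _ = ‖toEuclideanCLM (𝕜 := ℝ) A‖ * ∑ i, ‖v i‖ ^ 2 := by
        simp only [← Real.norm_eq_abs, ← sq_abs ⟪_, _⟫, b.sum_sq_norm_inner_right, w,
          Submodule.coe_norm]

end QuadraticForm

section RectangleIntegrals

open Function
open scoped Interval

variable {E : Type*} [NormedAddCommGroup E] {a b c d : ℝ}

theorem integrableOn_uIoc_prod_of_continuousOn {f : ℝ → ℝ → E}
    (hf : ContinuousOn (uncurry f) ([[a, b]] ×ˢ [[c, d]])) :
    IntegrableOn (uncurry f) (Ι a b ×ˢ Ι c d) :=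
  (hf.integrableOn_compact (isCompact_uIcc.prod isCompact_uIcc)).mono_set
    (prod_mono uIoc_subset_uIcc uIoc_subset_uIcc)

variable [NormedSpace ℝ E]

theorem integral_eq_sub_of_hasDerivWithinAt_uIcc [CompleteSpace E] {f f' : ℝ → E}
    (hderiv : ∀ x ∈ [[a, b]], HasDerivWithinAt f (f' x) [[a, b]] x)
    (hint : IntervalIntegrable f' volume a b) :
    ∫ x in a..b, f' x = f b - f a :=
  integral_eq_sub_of_hasDeriv_right (fun x hx => (hderiv x hx).continuousWithinAt)
    (fun x hx => ((hderiv x (Ioo_subset_Icc_self hx)).hasDerivAt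
      (Icc_mem_nhds hx.1 hx.2)).hasDerivWithinAt) hint

theorem intervalIntegrable_integral_of_continuousOn {f : ℝ → ℝ → E}
    (hf : ContinuousOn (uncurry f) ([[a, b]] ×ˢ [[c, d]])) :
    IntervalIntegrable (fun t => ∫ x in a..b, f x t) volume c d := by
  have hint : Integrable (uncurry f)
      ((volume.restrict (Ι a b)).prod (volume.restrict (Ι c d))) := by
    rw [Measure.prod_restrict]
    exact integrableOn_uIoc_prod_of_continuousOn hf
  rw [intervalIntegrable_iff]
  simp only [intervalIntegral_eq_integral_uIoc]
  exact hint.integral_prod_right.smul (if a ≤ b then (1 : ℝ) else -1)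

theorem integral_integral_deriv_sub_deriv_eq [CompleteSpace E] {F Ft G Gx : ℝ → ℝ → E}
    (hFt_cont : ContinuousOn (uncurry Ft) ([[a, b]] ×ˢ [[c, d]]))
    (hGx_cont : ContinuousOn (uncurry Gx) ([[a, b]] ×ˢ [[c, d]]))
    (hFt : ∀ x ∈ [[a, b]], ∀ t ∈ [[c, d]], HasDerivWithinAt (F x) (Ft x t) [[c, d]] t)
    (hGx : ∀ t ∈ [[c, d]], ∀ x ∈ [[a, b]],
      HasDerivWithinAt (fun y => G y t) (Gx x t) [[a, b]] x) :
    ∫ t in c..d, ∫ x in a..b, (Ft x t - Gx x t) =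
      (∫ x in a..b, (F x d - F x c)) - ∫ t in c..d, (G b t - G a t) := by
  have integral_Ft : ∫ t in c..d, ∫ x in a..b, Ft x t = ∫ x in a..b, (F x d - F x c) := by
    rw [← intervalIntegral_intervalIntegral_swap (integrableOn_uIoc_prod_of_continuousOn hFt_cont)]
    exact integral_congr fun x hx => integral_eq_sub_of_hasDerivWithinAt_uIcc (hFt x hx)
      (hFt_cont.uncurry_left x hx).intervalIntegrable
  have integral_Gx : ∫ t in c..d, ∫ x in a..b, Gx x t = ∫ t in c..d, (G b t - G a t) :=
    integral_congr fun t ht => integral_eq_sub_of_hasDerivWithinAt_uIcc (hGx t ht)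
      (hGx_cont.uncurry_right t ht).intervalIntegrable
  rw [← integral_Ft, ← integral_Gx, ← integral_sub
    (intervalIntegrable_integral_of_continuousOn hFt_cont)
    (intervalIntegrable_integral_of_continuousOn hGx_cont)]
  exact integral_congr fun t ht => integral_sub
    (hFt_cont.uncurry_right t ht).intervalIntegrable
    (hGx_cont.uncurry_right t ht).intervalIntegrable

theorem integral_sub_integral_le_flux_add_of_deriv_le {F Ft G Gx : ℝ → ℝ → ℝ} {K : ℝ}
    (hab : a ≤ b) (hcd : c ≤ d)
    (hF_cont : ContinuousOn (uncurry F) (Icc a b ×ˢ Icc c d))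
    (hFt_cont : ContinuousOn (uncurry Ft) (Icc a b ×ˢ Icc c d))
    (hGx_cont : ContinuousOn (uncurry Gx) (Icc a b ×ˢ Icc c d))
    (hFt : ∀ x ∈ Icc a b, ∀ t ∈ Icc c d, HasDerivWithinAt (F x) (Ft x t) (Icc c d) t)
    (hGx : ∀ t ∈ Icc c d, ∀ x ∈ Icc a b,
      HasDerivWithinAt (fun y => G y t) (Gx x t) (Icc a b) x)
    (hle : ∀ x ∈ Ioo a b, ∀ t ∈ Ioo c d, Ft x t ≤ Gx x t + K * F x t) :
    (∫ x in a..b, F x d) - ∫ x in a..b, F x c ≤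
      (∫ t in c..d, (G b t - G a t)) + K * ∫ t in c..d, ∫ x in a..b, F x t := by
  simp only [← uIcc_of_le hab, ← uIcc_of_le hcd] at hF_cont hFt_cont hGx_cont hFt hGx
  have hdiff_cont : ContinuousOn (uncurry fun x t => Ft x t - Gx x t) ([[a, b]] ×ˢ [[c, d]]) :=
    hFt_cont.sub hGx_cont
  have hKF_cont : ContinuousOn (uncurry fun x t => K * F x t) ([[a, b]] ×ˢ [[c, d]]) :=
    continuousOn_const.mul hF_cont
  have hmono : ∫ t in c..d, ∫ x in a..b, (Ft x t - Gx x t) ≤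
      ∫ t in c..d, ∫ x in a..b, K * F x t := by
    refine integral_mono_on_of_le_Ioo hcd (intervalIntegrable_integral_of_continuousOn hdiff_cont)
      (intervalIntegrable_integral_of_continuousOn hKF_cont) fun t ht => ?_
    have ht' : t ∈ [[c, d]] := uIcc_of_le hcd ▸ Ioo_subset_Icc_self ht
    exact integral_mono_on_of_le_Ioo hab (hdiff_cont.uncurry_right t ht').intervalIntegrable
      (hKF_cont.uncurry_right t ht').intervalIntegrable
      fun x hx => sub_le_iff_le_add'.mpr (hle x hx t ht)
  simp only [intervalIntegral.integral_const_mul] at hmono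
  rw [integral_integral_deriv_sub_deriv_eq hFt_cont hGx_cont hFt hGx, integral_sub
    (hF_cont.uncurry_right d right_mem_uIcc).intervalIntegrable
    (hF_cont.uncurry_right c left_mem_uIcc).intervalIntegrable] at hmono
  exact sub_le_iff_le_add'.mp hmono

end RectangleIntegrals

section HalfLine

open Filter
open scoped Topology

theorem integrableOn_Ioi_and_integral_le_of_tendsto {f g : ℝ → ℝ} {a R : ℝ}
    (hf_cont : ContinuousOn f (Ici a)) (hf_nonneg : ∀ t, a ≤ t → 0 ≤ f t)
    (hle : ∀ T, a ≤ T → ∫ t in a..T, f t ≤ g T) (hg : Tendsto g atTop (𝓝 R)) :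
    IntegrableOn f (Ioi a) ∧ ∫ t in Ioi a, f t ≤ R := by
  have hint : IntegrableOn f (Ioi a) := by
    refine integrableOn_Ioi_of_intervalIntegral_norm_bounded (R + 1) a (fun T => ?_) tendsto_id ?_
    · exact (hf_cont.mono Icc_subset_Ici_self).integrableOn_Icc.mono_set Ioc_subset_Icc_self
    · filter_upwards [eventually_ge_atTop a, hg.eventually_le_const (lt_add_one R)] with T haT hgT
      calc ∫ t in a..T, ‖f t‖ = ∫ t in a..T, f t := integral_congr fun t ht =>
            Real.norm_of_nonneg (hf_nonneg t (uIcc_of_le haT ▸ ht).1)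
        _ ≤ g T := hle T haT
        _ ≤ R + 1 := hgT
  exact ⟨hint, le_of_tendsto_of_tendsto (intervalIntegral_tendsto_integral_Ioi a hint tendsto_id)
    hg ((eventually_ge_atTop a).mono hle)⟩

end HalfLine

section HyperbolicSystem

open Function
open scoped RealInnerProductSpace

variable {E : Type*} [NormedAddCommGroup E] [InnerProductSpace ℝ E]

/-- `f` is continuously differentiable on the product `s ×ˢ J` of a space and a time domain, with
partial derivatives `fx` and `ft`. They are one-sided at the boundary of the domain and are
data, so that no junk value of `deriv` is involved. -/
structure HasContinuousPartialsOn (f fx ft : ℝ → ℝ → E) (s J : Set ℝ) : Prop where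
  continuousOn : ContinuousOn (uncurry f) (s ×ˢ J)
  continuousOn_fst : ContinuousOn (uncurry fx) (s ×ˢ J)
  continuousOn_snd : ContinuousOn (uncurry ft) (s ×ˢ J)
  hasDerivWithinAt_fst : ∀ t ∈ J, ∀ x ∈ s, HasDerivWithinAt (fun y => f y t) (fx x t) s x
  hasDerivWithinAt_snd : ∀ x ∈ s, ∀ t ∈ J, HasDerivWithinAt (f x) (ft x t) J t

namespace HasContinuousPartialsOn

variable {f fx ft : ℝ → ℝ → E} {s J I : Set ℝ}

theorem mono_snd (hf : HasContinuousPartialsOn f fx ft s J) (hIJ : I ⊆ J) :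
    HasContinuousPartialsOn f fx ft s I where
  continuousOn := hf.continuousOn.mono (prod_mono_right hIJ)
  continuousOn_fst := hf.continuousOn_fst.mono (prod_mono_right hIJ)
  continuousOn_snd := hf.continuousOn_snd.mono (prod_mono_right hIJ)
  hasDerivWithinAt_fst t ht := hf.hasDerivWithinAt_fst t (hIJ ht)
  hasDerivWithinAt_snd x hx t ht := (hf.hasDerivWithinAt_snd x hx t (hIJ ht)).mono hIJ

theorem norm_sq (hf : HasContinuousPartialsOn f fx ft s J) :
    HasContinuousPartialsOn (fun x t => ‖f x t‖ ^ 2) (fun x t => 2 * ⟪f x t, fx x t⟫)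
      (fun x t => 2 * ⟪f x t, ft x t⟫) s J where
  continuousOn := hf.continuousOn.norm.pow 2
  continuousOn_fst := continuousOn_const.mul (hf.continuousOn.inner hf.continuousOn_fst)
  continuousOn_snd := continuousOn_const.mul (hf.continuousOn.inner hf.continuousOn_snd)
  hasDerivWithinAt_fst t ht x hx := (hf.hasDerivWithinAt_fst t ht x hx).norm_sq
  hasDerivWithinAt_snd x hx t ht := (hf.hasDerivWithinAt_snd x hx t ht).norm_sq

end HasContinuousPartialsOn

theorem energy_deriv_le_flux_deriv_add (A : Matrix (Fin 2) (Fin 2) ℝ) (u₁ u₂ lam0 : ℝ)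
    {p px pt q qx qt : E} (hp : pt = -u₁ • px + (A 0 0 • p + A 0 1 • q) + lam0 • p)
    (hq : qt = u₂ • qx + (A 1 0 • p + A 1 1 • q) + lam0 • q) :
    2 * ⟪p, pt⟫ + 2 * ⟪q, qt⟫ ≤ -u₁ * (2 * ⟪p, px⟫) + u₂ * (2 * ⟪q, qx⟫) +
      (2 * ‖Matrix.toEuclideanCLM (𝕜 := ℝ) A‖ + 2 * lam0) * (‖p‖ ^ 2 + ‖q‖ ^ 2) := by
  have coupling_le : ⟪p, A 0 0 • p + A 0 1 • q⟫ + ⟪q, A 1 0 • p + A 1 1 • q⟫ ≤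
      ‖Matrix.toEuclideanCLM (𝕜 := ℝ) A‖ * (‖p‖ ^ 2 + ‖q‖ ^ 2) := by
    simpa [Fin.sum_univ_two] using sum_inner_sum_smul_le A ![p, q]
  rw [hp, hq]
  simp only [inner_add_right, real_inner_smul_right, real_inner_self_eq_norm_sq] at coupling_le ⊢
  linarith

variable {u₁ u₂ lam0 a b c d : ℝ} {A : Matrix (Fin 2) (Fin 2) ℝ} {ξh ξc ξhx ξht ξcx ξct : ℝ → ℝ → E}

theorem energy_sub_energy_le_flux_add (hab : a ≤ b) (hcd : c ≤ d)
    (hξh : HasContinuousPartialsOn ξh ξhx ξht (Icc a b) (Icc c d))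
    (hξc : HasContinuousPartialsOn ξc ξcx ξct (Icc a b) (Icc c d))
    (hpde : ∀ x ∈ Ioo a b, ∀ t ∈ Ioo c d,
      ξht x t = -u₁ • ξhx x t + (A 0 0 • ξh x t + A 0 1 • ξc x t) + lam0 • ξh x t ∧
      ξct x t = u₂ • ξcx x t + (A 1 0 • ξh x t + A 1 1 • ξc x t) + lam0 • ξc x t) :
    (∫ x in a..b, (‖ξh x d‖ ^ 2 + ‖ξc x d‖ ^ 2)) - ∫ x in a..b, (‖ξh x c‖ ^ 2 + ‖ξc x c‖ ^ 2) ≤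
      (∫ t in c..d, ((-u₁ * ‖ξh b t‖ ^ 2 + u₂ * ‖ξc b t‖ ^ 2) -
        (-u₁ * ‖ξh a t‖ ^ 2 + u₂ * ‖ξc a t‖ ^ 2))) +
      (2 * ‖Matrix.toEuclideanCLM (𝕜 := ℝ) A‖ + 2 * lam0) *
        ∫ t in c..d, ∫ x in a..b, (‖ξh x t‖ ^ 2 + ‖ξc x t‖ ^ 2) :=
  integral_sub_integral_le_flux_add_of_deriv_le
    (F := fun x t => ‖ξh x t‖ ^ 2 + ‖ξc x t‖ ^ 2)
    (Ft := fun x t => 2 * ⟪ξh x t, ξht x t⟫ + 2 * ⟪ξc x t, ξct x t⟫)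
    (G := fun x t => -u₁ * ‖ξh x t‖ ^ 2 + u₂ * ‖ξc x t‖ ^ 2)
    (Gx := fun x t => -u₁ * (2 * ⟪ξh x t, ξhx x t⟫) + u₂ * (2 * ⟪ξc x t, ξcx x t⟫))
    hab hcd
    (hξh.norm_sq.continuousOn.add hξc.norm_sq.continuousOn)
    (hξh.norm_sq.continuousOn_snd.add hξc.norm_sq.continuousOn_snd)
    ((continuousOn_const.mul hξh.norm_sq.continuousOn_fst).add
      (continuousOn_const.mul hξc.norm_sq.continuousOn_fst))
    (fun x hx t ht => (hξh.norm_sq.hasDerivWithinAt_snd x hx t ht).add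
      (hξc.norm_sq.hasDerivWithinAt_snd x hx t ht))
    (fun t ht x hx => ((hξh.norm_sq.hasDerivWithinAt_fst t ht x hx).const_mul (-u₁)).add
      ((hξc.norm_sq.hasDerivWithinAt_fst t ht x hx).const_mul u₂))
    fun x hx t ht =>
      energy_deriv_le_flux_deriv_add A u₁ u₂ lam0 (hpde x hx t ht).1 (hpde x hx t ht).2

theorem integral_boundary_trace_le (hu₁ : 0 ≤ u₁) (hab : a ≤ b) (hcd : c ≤ d)
    (hξh : HasContinuousPartialsOn ξh ξhx ξht (Icc a b) (Icc c d))
    (hξc : HasContinuousPartialsOn ξc ξcx ξct (Icc a b) (Icc c d))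
    (hpde : ∀ x ∈ Ioo a b, ∀ t ∈ Ioo c d,
      ξht x t = -u₁ • ξhx x t + (A 0 0 • ξh x t + A 0 1 • ξc x t) + lam0 • ξh x t ∧
      ξct x t = u₂ • ξcx x t + (A 1 0 • ξh x t + A 1 1 • ξc x t) + lam0 • ξc x t)
    (hbc : ∀ t ∈ Icc c d, ξh a t = 0 ∧ ξc b t = 0) :
    ∫ t in c..d, u₂ * ‖ξc a t‖ ^ 2 ≤
      (2 * ‖Matrix.toEuclideanCLM (𝕜 := ℝ) A‖ + 2 * lam0) *
        (∫ t in c..d, ∫ x in a..b, (‖ξh x t‖ ^ 2 + ‖ξc x t‖ ^ 2)) +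
      ∫ x in a..b, (‖ξh x c‖ ^ 2 + ‖ξc x c‖ ^ 2) := by
  have trace_intervalIntegrable {f fx ft : ℝ → ℝ → E} {x : ℝ} (hx : x ∈ Icc a b)
      (hf : HasContinuousPartialsOn f fx ft (Icc a b) (Icc c d)) :
      IntervalIntegrable (fun t => ‖f x t‖ ^ 2) volume c d :=
    (hf.norm_sq.continuousOn.uncurry_left x hx).intervalIntegrable_of_Icc hcd
  have flux_eq : ∫ t in c..d, ((-u₁ * ‖ξh b t‖ ^ 2 + u₂ * ‖ξc b t‖ ^ 2) -
        (-u₁ * ‖ξh a t‖ ^ 2 + u₂ * ‖ξc a t‖ ^ 2)) =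
      -(∫ t in c..d, u₁ * ‖ξh b t‖ ^ 2) - ∫ t in c..d, u₂ * ‖ξc a t‖ ^ 2 := by
    simp only [← intervalIntegral.integral_neg, ← neg_mul]
    rw [← integral_sub
      ((trace_intervalIntegrable (right_mem_Icc.mpr hab) hξh).const_mul (-u₁))
      ((trace_intervalIntegrable (left_mem_Icc.mpr hab) hξc).const_mul u₂)]
    refine integral_congr fun t ht => ?_
    simp [hbc t (uIcc_of_le hcd ▸ ht)]
  have outflow_nonneg : 0 ≤ ∫ t in c..d, u₁ * ‖ξh b t‖ ^ 2 :=
    integral_nonneg hcd fun t _ => by positivity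
  have final_energy_nonneg : 0 ≤ ∫ x in a..b, (‖ξh x d‖ ^ 2 + ‖ξc x d‖ ^ 2) :=
    integral_nonneg hab fun x _ => by positivity
  have energy_le := energy_sub_energy_le_flux_add hab hcd hξh hξc hpde
  linarith

theorem boundary_trace_square_integrable_general (hu₁ : 0 ≤ u₁) (hu₂ : 0 < u₂) (hab : a ≤ b)
    (hξh : HasContinuousPartialsOn ξh ξhx ξht (Icc a b) (Ici 0))
    (hξc : HasContinuousPartialsOn ξc ξcx ξct (Icc a b) (Ici 0))
    (hpde : ∀ x ∈ Ioo a b, ∀ t ∈ Ioi 0,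
      ξht x t = -u₁ • ξhx x t + (A 0 0 • ξh x t + A 0 1 • ξc x t) + lam0 • ξh x t ∧
      ξct x t = u₂ • ξcx x t + (A 1 0 • ξh x t + A 1 1 • ξc x t) + lam0 • ξc x t)
    (hbc : ∀ t, 0 ≤ t → ξh a t = 0 ∧ ξc b t = 0)
    (hL2 : IntegrableOn (fun t => ∫ x in a..b, (‖ξh x t‖ ^ 2 + ‖ξc x t‖ ^ 2)) (Ioi 0)) :
    IntegrableOn (fun t => ‖ξc a t‖ ^ 2) (Ioi 0) ∧
    u₂ * ∫ t in Ioi 0, ‖ξc a t‖ ^ 2 ≤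
      (2 * ‖Matrix.toEuclideanCLM (𝕜 := ℝ) A‖ + 2 * lam0) *
        (∫ t in Ioi 0, ∫ x in a..b, (‖ξh x t‖ ^ 2 + ‖ξc x t‖ ^ 2)) +
      ∫ x in a..b, (‖ξh x 0‖ ^ 2 + ‖ξc x 0‖ ^ 2) := by
  have trace_cont : ContinuousOn (fun t => u₂ * ‖ξc a t‖ ^ 2) (Ici 0) :=
    continuousOn_const.mul (hξc.norm_sq.continuousOn.uncurry_left a (left_mem_Icc.mpr hab))
  have trace_le (T : ℝ) (hT : 0 ≤ T) := integral_boundary_trace_le hu₁ hab hT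
    (hξh.mono_snd Icc_subset_Ici_self) (hξc.mono_snd Icc_subset_Ici_self)
    (fun x hx t ht => hpde x hx t ht.1) fun t ht => hbc t ht.1
  have energy_tendsto := intervalIntegral_tendsto_integral_Ioi 0 hL2 Filter.tendsto_id
  obtain ⟨trace_int, trace_integral_le⟩ := integrableOn_Ioi_and_integral_le_of_tendsto trace_cont
    (fun t _ => by positivity) trace_le ((energy_tendsto.const_mul _).add_const _)
  exact ⟨(integrable_const_mul_iff hu₂.ne'.isUnit _).mp trace_int,
    MeasureTheory.integral_const_mul u₂ _ ▸ trace_integral_le⟩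

end HyperbolicSystem

/-- along any `C¹` solution `ξ` of the shifted error system whose
space-time `L²` energy is finite, the boundary trace `t ↦ ξ^c(0,t)` is
square-integrable on `(0,∞)` and
`u₂ ∫₀^∞ |ξ^c(0,t)|² dt ≤ (2|M|₂ + 2λ₀) ∫₀^∞ ∫₀¹ |ξ(x,t)|² dx dt + ∫₀¹ |ξ(x,0)|² dx`. -/
theorem boundary_trace_square_integrable
    (u₁ u₂ c₁ c₂ lam0 : ℝ) (hu₁ : 0 < u₁) (hu₂ : 0 < u₂) (hc₁ : 0 < c₁) (hc₂ : 0 < c₂)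
    (hlam0 : 0 < lam0)
    (ξh ξc ξhx ξht ξcx ξct : ℝ → ℝ → ℂ)
    (hch : ContinuousOn (fun p : ℝ × ℝ => ξh p.1 p.2) (Icc 0 1 ×ˢ Ici 0))
    (hcc : ContinuousOn (fun p : ℝ × ℝ => ξc p.1 p.2) (Icc 0 1 ×ˢ Ici 0))
    (hchx : ContinuousOn (fun p : ℝ × ℝ => ξhx p.1 p.2) (Icc 0 1 ×ˢ Ici 0))
    (hcht : ContinuousOn (fun p : ℝ × ℝ => ξht p.1 p.2) (Icc 0 1 ×ˢ Ici 0))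
    (hccx : ContinuousOn (fun p : ℝ × ℝ => ξcx p.1 p.2) (Icc 0 1 ×ˢ Ici 0))
    (hcct : ContinuousOn (fun p : ℝ × ℝ => ξct p.1 p.2) (Icc 0 1 ×ˢ Ici 0))
    (hdhx : ∀ t ∈ Ici (0:ℝ), ∀ x ∈ Icc (0:ℝ) 1,
      HasDerivWithinAt (fun s => ξh s t) (ξhx x t) (Icc 0 1) x)
    (hdht : ∀ x ∈ Icc (0:ℝ) 1, ∀ t ∈ Ici (0:ℝ),
      HasDerivWithinAt (fun s => ξh x s) (ξht x t) (Ici 0) t)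
    (hdcx : ∀ t ∈ Ici (0:ℝ), ∀ x ∈ Icc (0:ℝ) 1,
      HasDerivWithinAt (fun s => ξc s t) (ξcx x t) (Icc 0 1) x)
    (hdct : ∀ x ∈ Icc (0:ℝ) 1, ∀ t ∈ Ici (0:ℝ),
      HasDerivWithinAt (fun s => ξc x s) (ξct x t) (Ici 0) t)
    (hpde : ∀ x ∈ Ioo (0:ℝ) 1, ∀ t ∈ Ioi (0:ℝ),
      ξht x t = -(u₁ : ℂ) * ξhx x t - (c₁ : ℂ) * (ξh x t - ξc x t) + (lam0 : ℂ) * ξh x t ∧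
      ξct x t = (u₂ : ℂ) * ξcx x t + (c₂ : ℂ) * (ξh x t - ξc x t) + (lam0 : ℂ) * ξc x t)
    (hbc : ∀ t : ℝ, 0 ≤ t → ξh 0 t = 0 ∧ ξc 1 t = 0)
    -- finite space-time `L²` energy:
    (hL2 : IntegrableOn
      (fun t => ∫ x in (0:ℝ)..1, (‖ξh x t‖ ^ 2 + ‖ξc x t‖ ^ 2)) (Ioi 0) volume) :
    IntegrableOn (fun t => ‖ξc 0 t‖ ^ 2) (Ioi 0) volume ∧
    u₂ * ∫ t in Ioi (0:ℝ), ‖ξc 0 t‖ ^ 2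
      ≤ (2 * specNormM c₁ c₂ + 2 * lam0)
          * (∫ t in Ioi (0:ℝ), ∫ x in (0:ℝ)..1, (‖ξh x t‖ ^ 2 + ‖ξc x t‖ ^ 2))
        + ∫ x in (0:ℝ)..1, (‖ξh x 0‖ ^ 2 + ‖ξc x 0‖ ^ 2) := by
  refine boundary_trace_square_integrable_general (A := !![-c₁, c₁; c₂, -c₂]) hu₁.le hu₂
    zero_le_one ⟨hch, hchx, hcht, hdhx, hdht⟩ ⟨hcc, hccx, hcct, hdcx, hdct⟩
    (fun x hx t ht => ?_) hbc hL2
  simpa [sub_eq_add_neg, mul_add, add_assoc, add_comm, add_left_comm] using hpde x hx t ht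
end
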